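/- For every F ∈ 𝔉, write F = (4 n_ij) with nonnegative integers n_ij (possible by Proposition 3.3, and the n_ij are uniquely determined by F), and set N_i = n_i1 + n_i2 + n_i3 for i = 1, 2, 3. Then ((N_1 − N_3) mod 4, (N_2 − N_3) mod 4) ∈ 𝒯; this pair is called the type of F. Moreover, every one of the eight pairs in 𝒯 occurs as the type of some F ∈ 𝔉. -/

import Mathlib

/-- The (normalized) Cartan matrix of the affine Lie algebra `B₂⁽¹⁾`. -/
noncomputable def cartanB2 : Matrix (Fin 3) (Fin 3) ℝ :=
  !![1, 0, -1; 0, 1, -1; -1/2, -1/2, 1]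

/-- The lift of the generator `R_i` to 3×3 real matrices: the `i`-th row `F_i` is
replaced by `F_i + 4 e_i - 2 ∑_j a_{ij} F_j` and the other rows are unchanged. -/
noncomputable def RM (i : Fin 3) (F : Matrix (Fin 3) (Fin 3) ℝ) : Matrix (Fin 3) (Fin 3) ℝ :=
  Matrix.updateRow F i
    (fun k => F i k + 4 * (if k = i then 1 else 0) - 2 * ∑ j, cartanB2 i j * F j k)

/-- Membership in `𝔉`, the smallest set of 3×3 real matrices containing the zero
matrix and closed under the lifted generators `R₁, R₂, R₃`. -/
inductive FMem : Matrix (Fin 3) (Fin 3) ℝ → Prop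
  | zero : FMem 0
  | step (i : Fin 3) {F : Matrix (Fin 3) (Fin 3) ℝ} : FMem F → FMem (RM i F)

/-- The set `𝒯` of the eight admissible types in `(ℤ/4ℤ)²`. -/
def Ttypes : Set (ZMod 4 × ZMod 4) :=
  {(0, 0), (0, 1), (1, 0), (1, 1), (2, 2), (2, 3), (3, 2), (3, 3)}

/-!
Dividing by `4`, the orbit `𝔉` becomes a set of integer matrices `M`. For each `μ`, the
reflections move `M μ` along a quadric, the Pohozaev identity: on every line parallel to a
coordinate axis they exchange its two intersection points with the quadric. For `μ` a standard
basis vector, the integer points of the quadric have nonnegative coordinates, so `M` is nonnegative.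
For `μ = (1, 1, 1)`, `M μ` is the vector `N` of row sums and, with `x = N₁ - N₃` and `y = N₂ - N₃`,
the identity reads `x² + y² = x + y + 4 N₃`; the solutions of `x² + y² = x + y` in `(ℤ/4ℤ)²` are
exactly the elements of `𝒯`. Conversely, the reflections act on the types `(x, y)` themselves, and
`𝒯` is a single orbit of this action.
-/

open Matrix

section AffineReflection

variable {ι R S : Type*} [Fintype ι] [DecidableEq ι] [CommRing R] [CommRing S]

/-- The affine reflection `v ↦ v + (μ i - (C v) i) e_i` attached to a Cartan matrix `C`. For
`C = 2a` it is the map `R_i` in the coordinates `σ = 4v`. -/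
def affineReflect (C : Matrix ι ι R) (μ : ι → R) (i : ι) (v : ι → R) : ι → R :=
  v + single i i 1 *ᵥ (μ - C *ᵥ v)

/-- The lift of `affineReflect` to matrices, obtained by making the parameter `μ` formal. -/
def matrixReflect (C : Matrix ι ι R) (i : ι) (M : Matrix ι ι R) : Matrix ι ι R :=
  M + single i i 1 * (1 - C * M)

/-- The matrix reached from `0` by a word in the lifted reflections, the last letter acting
first. -/
def wordMatrix (C : Matrix ι ι R) (w : List ι) : Matrix ι ι R :=
  w.foldr (matrixReflect C) 0

/-- The Pohozaev identity for `C` with symmetrizer `d`: the vector `v` lies on the quadric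
`vᵀ D C v = 2 vᵀ D μ`, where `D` is the diagonal matrix of `d`. -/
def Pohozaev (C : Matrix ι ι R) (d μ v : ι → R) : Prop :=
  v ⬝ᵥ (diagonal d * C) *ᵥ v = 2 * (v ⬝ᵥ diagonal d *ᵥ μ)

theorem affineReflect_eq_add_single (C : Matrix ι ι R) (μ : ι → R) (i : ι) (v : ι → R) :
    affineReflect C μ i v = v + Pi.single i (μ i - (C *ᵥ v) i) := by
  simp [affineReflect, single_mulVec, Pi.single]

theorem matrixReflect_mulVec (C M : Matrix ι ι R) (μ : ι → R) (i : ι) :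
    matrixReflect C i M *ᵥ μ = affineReflect C μ i (M *ᵥ μ) := by
  simp [matrixReflect, affineReflect, add_mulVec, sub_mulVec, ← mulVec_mulVec]

theorem matrixReflect_map (f : R →+* S) (C M : Matrix ι ι R) (i : ι) :
    (matrixReflect C i M).map f = matrixReflect (C.map f) i (M.map f) := by
  simp only [matrixReflect, ← RingHom.mapMatrix_apply, map_add, map_mul, map_sub, map_one]
  simp

theorem wordMatrix_mulVec (C : Matrix ι ι R) (μ : ι → R) (w : List ι) :
    wordMatrix C w *ᵥ μ = w.foldr (affineReflect C μ) 0 := by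
  rw [wordMatrix, ← zero_mulVec μ]
  exact (List.foldr_hom (· *ᵥ μ) fun i M => (matrixReflect_mulVec C M μ i).symm).symm

variable {C : Matrix ι ι R} {d μ v : ι → R}

-- On the line through `v` in direction `e_i` the quadric is given by a quadratic equation; since
-- `C i i = 2`, the reflection exchanges its two roots.
theorem Pohozaev.affineReflect {i : ι} (hC : C i i = 2) (hd : (diagonal d * C).IsSymm)
    (h : Pohozaev C d μ v) : Pohozaev C d μ (affineReflect C μ i v) := by
  have hBv : ((diagonal d * C) *ᵥ v) i = d i * (C *ᵥ v) i := by
    rw [← mulVec_mulVec, mulVec_diagonal]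
  have hBsymm (t : R) :
      v ⬝ᵥ (diagonal d * C) *ᵥ Pi.single i t = ((diagonal d * C) *ᵥ v) i * t := by
    rw [dotProduct_mulVec, ← mulVec_transpose, hd.eq, dotProduct_single]
  have hBii (t : R) : ((diagonal d * C) *ᵥ Pi.single i t) i = 2 * d i * t := by
    simp [mulVec_single, hC, mul_comm]
  unfold Pohozaev at h ⊢
  rw [affineReflect_eq_add_single]
  simp only [mulVec_add, add_dotProduct, dotProduct_add, single_dotProduct, hBsymm, hBii, hBv,
    mulVec_diagonal]
  linear_combination h

theorem pohozaev_wordMatrix_mulVec (hC : ∀ i, C i i = 2) (hd : (diagonal d * C).IsSymm)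
    (μ : ι → R) (w : List ι) : Pohozaev C d μ (wordMatrix C w *ᵥ μ) := by
  rw [wordMatrix_mulVec]
  exact List.foldrRecOn w _ (by simp [Pohozaev]) fun _ h i _ => h.affineReflect (hC i) hd

end AffineReflection

/-- The integral matrix `2a`, the Cartan matrix of `B₂⁽¹⁾` without the normalization. -/
def intCartanB2 : Matrix (Fin 3) (Fin 3) ℤ :=
  !![2, 0, -2; 0, 2, -2; -1, -1, 2]

theorem intCartanB2_diag (i : Fin 3) : intCartanB2 i i = 2 := by
  fin_cases i <;> rfl

theorem isSymm_diagonal_mul_intCartanB2 : (diagonal ![1, 1, 2] * intCartanB2).IsSymm := by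
  decide

theorem intCartanB2_map_cast : intCartanB2.map (Int.cast : ℤ → ℝ) = (2 : ℝ) • cartanB2 := by
  ext i j
  fin_cases i <;> fin_cases j <;> norm_num [intCartanB2, cartanB2]

theorem pohozaev_intCartanB2_iff {μ v : Fin 3 → ℤ} :
    Pohozaev intCartanB2 ![1, 1, 2] μ v ↔
      (v 0 - v 2) ^ 2 + (v 1 - v 2) ^ 2 = μ 0 * v 0 + μ 1 * v 1 + 2 * μ 2 * v 2 := by
  have hquad : v ⬝ᵥ (diagonal ![1, 1, 2] * intCartanB2) *ᵥ v =
      2 * ((v 0 - v 2) ^ 2 + (v 1 - v 2) ^ 2) := by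
    simp [intCartanB2, dotProduct, mulVec, Fin.sum_univ_three]
    ring
  have hlin : v ⬝ᵥ diagonal ![1, 1, 2] *ᵥ μ = μ 0 * v 0 + μ 1 * v 1 + 2 * μ 2 * v 2 := by
    simp [mulVec_diagonal, dotProduct, Fin.sum_univ_three]
    ring
  rw [Pohozaev, hquad, hlin, mul_right_inj' two_ne_zero]

theorem pohozaev_wordMatrix_intCartanB2 (μ : Fin 3 → ℤ) (w : List (Fin 3)) :
    Pohozaev intCartanB2 ![1, 1, 2] μ (wordMatrix intCartanB2 w *ᵥ μ) :=
  pohozaev_wordMatrix_mulVec intCartanB2_diag isSymm_diagonal_mul_intCartanB2 μ w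

theorem lower_bounds_of_sq_add_sq_eq {R : Type*} [CommRing R] [LinearOrder R]
    [IsStrictOrderedRing R] {μ v : Fin 3 → R}
    (h : (v 0 - v 2) ^ 2 + (v 1 - v 2) ^ 2 = μ 0 * v 0 + μ 1 * v 1 + 2 * μ 2 * v 2) :
    -((μ 1 + 2 * μ 2) ^ 2 + μ 1 ^ 2) ≤ 4 * (μ 0 + μ 1 + 2 * μ 2) * v 0 ∧
      -(μ 0 ^ 2 + (μ 0 + 2 * μ 2) ^ 2) ≤ 4 * (μ 0 + μ 1 + 2 * μ 2) * v 1 ∧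
      -(μ 0 ^ 2 + μ 1 ^ 2) ≤ 4 * (μ 0 + μ 1 + 2 * μ 2) * v 2 := by
  refine ⟨?_, ?_, ?_⟩
  · linear_combination 4 * h + sq_nonneg (2 * (v 0 - v 2) + μ 1 + 2 * μ 2) +
      sq_nonneg (2 * (v 1 - v 2) - μ 1)
  · linear_combination 4 * h + sq_nonneg (2 * (v 0 - v 2) - μ 0) +
      sq_nonneg (2 * (v 1 - v 2) + μ 0 + 2 * μ 2)
  · linear_combination 4 * h + sq_nonneg (2 * (v 0 - v 2) - μ 0) +
      sq_nonneg (2 * (v 1 - v 2) - μ 1)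

-- For `μ` a standard basis vector, each of the three lower bounds says `-1 < v i`.
theorem Pohozaev.nonneg_of_single {k : Fin 3} {v : Fin 3 → ℤ}
    (h : Pohozaev intCartanB2 ![1, 1, 2] (Pi.single k 1) v) (i : Fin 3) : 0 ≤ v i := by
  have hv := lower_bounds_of_sq_add_sq_eq (pohozaev_intCartanB2_iff.1 h)
  fin_cases k <;> fin_cases i <;> simp at hv ⊢ <;> omega

theorem wordMatrix_intCartanB2_nonneg (w : List (Fin 3)) (i k : Fin 3) :
    0 ≤ wordMatrix intCartanB2 w i k := by
  simpa using (pohozaev_wordMatrix_intCartanB2 (Pi.single k 1) w).nonneg_of_single i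

theorem RM_four_smul (i : Fin 3) (M : Matrix (Fin 3) (Fin 3) ℝ) :
    RM i ((4 : ℝ) • M) = (4 : ℝ) • matrixReflect ((2 : ℝ) • cartanB2) i M := by
  ext a k
  rcases eq_or_ne a i with rfl | ha
  · have hCM : (cartanB2 * (4 : ℝ) • M) a k = 4 * (cartanB2 * M) a k := by
      rw [Matrix.mul_smul, Matrix.smul_apply, smul_eq_mul]
    rw [RM, updateRow_self, ← Matrix.mul_apply, hCM]
    simp only [matrixReflect, Matrix.smul_apply, Matrix.add_apply, single_mul_apply_same,
      Matrix.sub_apply, one_apply, smul_mul, smul_eq_mul, eq_comm (a := k)]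
    ring
  · simp [RM, matrixReflect, ha]

theorem foldr_RM_zero (w : List (Fin 3)) :
    w.foldr RM 0 = (4 : ℝ) • (wordMatrix intCartanB2 w).map (Int.cast : ℤ → ℝ) := by
  induction w with
  | nil => ext; simp [wordMatrix]
  | cons i w ih =>
    have hmap := matrixReflect_map (Int.castRingHom ℝ) intCartanB2 (wordMatrix intCartanB2 w) i
    rw [Int.coe_castRingHom, intCartanB2_map_cast] at hmap
    rw [List.foldr_cons, ih, RM_four_smul, ← hmap]
    rfl

theorem fMem_iff_exists_foldr_RM {F : Matrix (Fin 3) (Fin 3) ℝ} :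
    FMem F ↔ ∃ w : List (Fin 3), w.foldr RM 0 = F := by
  refine ⟨fun h => ?_, ?_⟩
  · induction h with
    | zero => exact ⟨[], rfl⟩
    | step i _ ih =>
      obtain ⟨w, rfl⟩ := ih
      exact ⟨i :: w, rfl⟩
  · rintro ⟨w, rfl⟩
    exact List.foldrRecOn w _ .zero fun _ h i _ => h.step i

theorem foldr_RM_zero_eq_natCast_iff {w : List (Fin 3)} {n : Fin 3 → Fin 3 → ℕ} :
    (∀ i j, w.foldr RM 0 i j = 4 * (n i j : ℝ)) ↔
      ∀ i j, wordMatrix intCartanB2 w i j = n i j := by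
  simp only [foldr_RM_zero, Matrix.smul_apply, map_apply, smul_eq_mul,
    mul_right_inj' (four_ne_zero' ℝ)]
  norm_cast

theorem exists_foldr_RM_zero_eq_natCast (w : List (Fin 3)) :
    ∃ n : Fin 3 → Fin 3 → ℕ, ∀ i j, w.foldr RM 0 i j = 4 * (n i j : ℝ) :=
  ⟨fun i j => (wordMatrix intCartanB2 w i j).toNat, foldr_RM_zero_eq_natCast_iff.2 fun i j =>
    (Int.toNat_of_nonneg (wordMatrix_intCartanB2_nonneg w i j)).symm⟩

/-- The type of a matrix in `(ℤ/4ℤ)²`, as a function of the vector `N` of its row sums. -/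
def rowSumType (N : Fin 3 → ℤ) : ZMod 4 × ZMod 4 :=
  (N 0 - N 2, N 1 - N 2)

theorem rowSumType_mulVec_one {M : Matrix (Fin 3) (Fin 3) ℤ} {n : Fin 3 → Fin 3 → ℕ}
    (h : ∀ i j, M i j = n i j) :
    rowSumType (M *ᵥ 1) = (((∑ j, n 0 j : ℕ) : ZMod 4) - ((∑ j, n 2 j : ℕ) : ZMod 4),
      ((∑ j, n 1 j : ℕ) : ZMod 4) - ((∑ j, n 2 j : ℕ) : ZMod 4)) := by
  simp [rowSumType, mulVec, dotProduct, h]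

theorem mem_Ttypes_iff {x y : ZMod 4} : (x, y) ∈ Ttypes ↔ x ^ 2 + y ^ 2 = x + y := by
  simp only [Ttypes, Set.mem_insert_iff, Set.mem_singleton_iff]
  decide +revert

theorem Pohozaev.rowSumType_mem_Ttypes {N : Fin 3 → ℤ}
    (h : Pohozaev intCartanB2 ![1, 1, 2] 1 N) : rowSumType N ∈ Ttypes := by
  have hmod := congrArg (Int.cast : ℤ → ZMod 4) (pohozaev_intCartanB2_iff.1 h)
  push_cast [Pi.one_apply] at hmod
  have four_eq_zero : (4 : ZMod 4) = 0 := rfl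
  rw [rowSumType, mem_Ttypes_iff]
  linear_combination hmod + N 2 * four_eq_zero

/-- The action on types induced by the affine reflections for `μ = (1, 1, 1)`, under which the row
sums of the matrices `F / 4` move. -/
def typeReflect (i : Fin 3) (t : ZMod 4 × ZMod 4) : ZMod 4 × ZMod 4 :=
  ![(1 - t.1, t.2), (t.1, 1 - t.2), (-1 - t.2, -1 - t.1)] i

theorem rowSumType_affineReflect (i : Fin 3) (N : Fin 3 → ℤ) :
    rowSumType (affineReflect intCartanB2 1 i N) = typeReflect i (rowSumType N) := by
  apply Prod.ext <;> fin_cases i <;>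
    simp [rowSumType, affineReflect_eq_add_single, typeReflect, intCartanB2, mulVec, dotProduct,
      Fin.sum_univ_three] <;> ring

theorem rowSumType_wordMatrix (w : List (Fin 3)) :
    rowSumType (wordMatrix intCartanB2 w *ᵥ 1) = w.foldr typeReflect 0 := by
  have rowSumType_zero : rowSumType 0 = 0 := by simp [rowSumType]
  rw [wordMatrix_mulVec, ← rowSumType_zero]
  exact (List.foldr_hom rowSumType fun i N => (rowSumType_affineReflect i N).symm).symm

theorem exists_foldr_typeReflect {t : ZMod 4 × ZMod 4} (ht : t ∈ Ttypes) :
    ∃ w : List (Fin 3), w.foldr typeReflect 0 = t := by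
  rcases ht with rfl | rfl | rfl | rfl | rfl | rfl | rfl | rfl
  exacts [⟨[], rfl⟩, ⟨[1], rfl⟩, ⟨[0], rfl⟩, ⟨[0, 1], rfl⟩, ⟨[0, 1, 2], rfl⟩, ⟨[0, 2], rfl⟩,
    ⟨[1, 2], rfl⟩, ⟨[2], rfl⟩]

/-- Each `F ∈ 𝔉` can be written as `F = (4 n_{ij})` with `n_{ij} ∈ ℕ`; its type
`((N₁ - N₃) mod 4, (N₂ - N₃) mod 4)`, where `N_i = n_{i1} + n_{i2} + n_{i3}`, lies in `𝒯`;
and every pair in `𝒯` occurs as the type of some `F ∈ 𝔉`. -/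
theorem fmat_types :
    (∀ F : Matrix (Fin 3) (Fin 3) ℝ, FMem F →
      (∃ n : Fin 3 → Fin 3 → ℕ, ∀ i j, F i j = 4 * (n i j : ℝ)) ∧
      (∀ n : Fin 3 → Fin 3 → ℕ, (∀ i j, F i j = 4 * (n i j : ℝ)) →
        (((∑ j, n 0 j : ℕ) : ZMod 4) - ((∑ j, n 2 j : ℕ) : ZMod 4),
          ((∑ j, n 1 j : ℕ) : ZMod 4) - ((∑ j, n 2 j : ℕ) : ZMod 4)) ∈ Ttypes)) ∧
    (∀ t ∈ Ttypes, ∃ F : Matrix (Fin 3) (Fin 3) ℝ, FMem F ∧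
      ∃ n : Fin 3 → Fin 3 → ℕ, (∀ i j, F i j = 4 * (n i j : ℝ)) ∧
        (((∑ j, n 0 j : ℕ) : ZMod 4) - ((∑ j, n 2 j : ℕ) : ZMod 4),
          ((∑ j, n 1 j : ℕ) : ZMod 4) - ((∑ j, n 2 j : ℕ) : ZMod 4)) = t) := by
  refine ⟨fun F hF => ?_, fun t ht => ?_⟩
  · obtain ⟨w, rfl⟩ := fMem_iff_exists_foldr_RM.1 hF
    refine ⟨exists_foldr_RM_zero_eq_natCast w, fun n hn => ?_⟩
    rw [← rowSumType_mulVec_one (foldr_RM_zero_eq_natCast_iff.1 hn)]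
    exact (pohozaev_wordMatrix_intCartanB2 1 w).rowSumType_mem_Ttypes
  · obtain ⟨w, rfl⟩ := exists_foldr_typeReflect ht
    obtain ⟨n, hn⟩ := exists_foldr_RM_zero_eq_natCast w
    refine ⟨_, fMem_iff_exists_foldr_RM.2 ⟨w, rfl⟩, n, hn, ?_⟩
    rw [← rowSumType_mulVec_one (foldr_RM_zero_eq_natCast_iff.1 hn), rowSumType_wordMatrix]
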